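/- Let G be a finite simple graph and let S be an independent vertex-wise dominating set of G. Then the neighborhood N_G(S) := ⋃_{s∈S} N_G(s) is a minimal vertex cover of G. -/

import Mathlib

/-- `S` is an independent set of the graph `G`. -/
def IsIndepSet {V : Type*} (G : SimpleGraph V) (S : Set V) : Prop :=
  ∀ x ∈ S, ∀ y ∈ S, ¬ G.Adj x y

/-- `u` vertex-wise dominates the edge `xy`: `u ∈ N_G[x] ∪ N_G[y]`. -/
def VeDominates {V : Type*} (G : SimpleGraph V) (u x y : V) : Prop :=
  u = x ∨ u = y ∨ G.Adj u x ∨ G.Adj u y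

/-- `S` is a vertex-wise dominating set of `G`. -/
def IsVeDomSet {V : Type*} (G : SimpleGraph V) (S : Set V) : Prop :=
  ∀ x y : V, G.Adj x y → ∃ s ∈ S, VeDominates G s x y

/-- `W` is a vertex cover of `G`. -/
def IsVertexCover {V : Type*} (G : SimpleGraph V) (W : Set V) : Prop :=
  ∀ x y : V, G.Adj x y → x ∈ W ∨ y ∈ W

/-- `W` is a minimal vertex cover of `G`. -/
def IsMinVertexCover {V : Type*} (G : SimpleGraph V) (W : Set V) : Prop :=
  IsVertexCover G W ∧ ∀ W' ⊂ W, ¬ IsVertexCover G W'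

/-- `N_G(S) = ⋃_{s ∈ S} N_G(s)`. -/
def nbhdSet {V : Type*} (G : SimpleGraph V) (S : Set V) : Set V :=
  {v : V | ∃ s ∈ S, G.Adj s v}

/-- If `S` is an independent vertex-wise dominating set of a
finite simple graph `G`, then `N_G(S)` is a minimal vertex cover of `G`. -/
theorem nbhd_of_indep_veDom_isMinVertexCover {V : Type*} [Fintype V] [DecidableEq V]
    (G : SimpleGraph V) (S : Set V)
    (hindep : IsIndepSet G S) (hdom : IsVeDomSet G S) :
    IsMinVertexCover G (nbhdSet G S) := by
  refine ⟨?_, ?_⟩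
  · intro x y hxy
    obtain ⟨s, hs, h⟩ := hdom x y hxy
    rcases h with h | h | h | h
    · subst h
      exact Or.inr ⟨s, hs, hxy⟩
    · subst h
      exact Or.inl ⟨s, hs, hxy.symm⟩
    · exact Or.inl ⟨s, hs, h⟩
    · exact Or.inr ⟨s, hs, h⟩
  · intro W hW hc
    apply hW.2
    rintro v ⟨s, hs, hsv⟩
    rcases hc s v hsv with h | h
    · obtain ⟨t, ht, hts⟩ := hW.1 h
      exact absurd hts (hindep t ht s hs)
    · exact h
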